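/- arXiv:2105.00254 — 5 statements merged into one kernel-verified Lean document; each statement's English description precedes it below -/
import Mathlib

section
/- Let G be a 2-connected graph, let e = uv be an edge of G, and let f : V(G) → {0,1} be a function with ∑_{z ∈ V(G)} f(z) even. If f(u) = 0 or f(v) = 0, then G has an f-parity perfect forest that does not contain the edge e. -/
open SimpleGraph

/-- The degree of `v` in `F`, defined via `Set.ncard` so that no decidability
instances are needed. -/
noncomputable def fdeg {V : Type*} (F : SimpleGraph V) (v : V) : ℕ :=
  (F.neighborSet v).ncard

/-- `F` is a semiperfect spanning forest of `G`: `F` is a spanning subgraph of `G`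
that is a forest, and every connected component of `F` is an induced subgraph of `G`. -/
def IsSemiperfectForest {V : Type*} (G F : SimpleGraph V) : Prop :=
  F ≤ G ∧ F.IsAcyclic ∧ ∀ x y : V, F.Reachable x y → G.Adj x y → F.Adj x y

lemma pf_add {V : Type*} [Finite V] [DecidableEq V] (F : SimpleGraph V) (x y : V) (hxy : x ≠ y)
    (hn : ¬ F.Adj x y) (w : V) :
    ((fdeg (F ⊔ SimpleGraph.edge x y) w : ℕ) : ZMod 2) =
      (fdeg F w : ZMod 2) + ((if w = x then 1 else 0) + (if w = y then 1 else 0)) := by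
  unfold fdeg
  by_cases h1 : w = x
  · subst h1
    have : (F ⊔ SimpleGraph.edge w y).neighborSet w = insert y (F.neighborSet w) := by
      ext z
      simp only [SimpleGraph.mem_neighborSet, SimpleGraph.sup_adj, SimpleGraph.edge_adj,
        Set.mem_insert_iff]
      grind
    rw [this, Set.ncard_insert_of_notMem (by simpa using hn) (Set.toFinite _)]
    simp [hxy]
  · by_cases h2 : w = y
    · subst h2
      have : (F ⊔ SimpleGraph.edge x w).neighborSet w = insert x (F.neighborSet w) := by
        ext z
        simp only [SimpleGraph.mem_neighborSet, SimpleGraph.sup_adj, SimpleGraph.edge_adj,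
          Set.mem_insert_iff]
        grind
      rw [this, Set.ncard_insert_of_notMem (by simpa [SimpleGraph.adj_comm] using hn)
        (Set.toFinite _)]
      simp [h1]
    · have : (F ⊔ SimpleGraph.edge x y).neighborSet w = F.neighborSet w := by
        ext z
        simp only [SimpleGraph.mem_neighborSet, SimpleGraph.sup_adj, SimpleGraph.edge_adj]
        grind
      rw [this]
      simp [h1, h2]

lemma pf_two (a b : ZMod 2) : a + b + b = a := by
  revert a b; decide

lemma pf_del {V : Type*} [Finite V] [DecidableEq V] (F : SimpleGraph V) (x y : V)
    (hn : F.Adj x y) (w : V) :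
    ((fdeg (F \ SimpleGraph.edge x y) w : ℕ) : ZMod 2) =
      (fdeg F w : ZMod 2) + ((if w = x then 1 else 0) + (if w = y then 1 else 0)) := by
  have h := pf_add (F \ SimpleGraph.edge x y) x y hn.ne
    (by simp [SimpleGraph.edge_adj, hn.ne]) w
  have h' : F \ SimpleGraph.edge x y ⊔ SimpleGraph.edge x y = F :=
    sdiff_sup_cancel (by
      intro a b hab
      rw [SimpleGraph.edge_adj] at hab
      rcases hab with ⟨⟨rfl, rfl⟩ | ⟨rfl, rfl⟩, _⟩
      · exact hn
      · exact hn.symm)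
  rw [h'] at h
  rw [h, pf_two]

lemma pf_edges {V : Type*} (F : SimpleGraph V) (x y : V) (hxy : x ≠ y) :
    (F ⊔ SimpleGraph.edge x y).edgeSet = insert s(x, y) F.edgeSet := by
  rw [SimpleGraph.edgeSet_sup, SimpleGraph.edgeSet_edge_of_ne hxy, Set.union_singleton]

lemma pf_edges' {V : Type*} (F : SimpleGraph V) (x y : V) (hxy : x ≠ y) :
    (F \ SimpleGraph.edge x y).edgeSet = F.edgeSet \ {s(x, y)} := by
  rw [SimpleGraph.edgeSet_sdiff, SimpleGraph.edgeSet_edge_of_ne hxy]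

lemma pf_walk {V : Type*} [Finite V] [DecidableEq V] (H : SimpleGraph V) {x y : V} (p : H.Walk x y) :
    ∀ F : SimpleGraph V, F ≤ H → ∃ F' : SimpleGraph V, F' ≤ H ∧
      ∀ w, (fdeg F' w : ZMod 2) =
        (fdeg F w : ZMod 2) + ((if w = x then 1 else 0) + (if w = y then 1 else 0)) := by
  induction p with
  | nil =>
    intro F hF
    refine ⟨F, hF, fun w => ?_⟩
    rw [← add_assoc, pf_two]
  | @cons a b c h q ih =>
    intro F hF
    obtain ⟨F1, hF1, h1⟩ := ih F hF
    by_cases hab : F1.Adj a b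
    · refine ⟨F1 \ SimpleGraph.edge a b, sdiff_le.trans hF1, fun w => ?_⟩
      rw [pf_del _ _ _ hab, h1]
      linear_combination pf_two 0 (if w = b then (1 : ZMod 2) else 0)
    · refine ⟨F1 ⊔ SimpleGraph.edge a b, sup_le hF1 ?_, fun w => ?_⟩
      · intro c d hab
        rw [SimpleGraph.edge_adj] at hab
        rcases hab with ⟨⟨rfl, rfl⟩ | ⟨rfl, rfl⟩, _⟩
        · exact h
        · exact h.symm
      rw [pf_add _ _ _ h.ne hab, h1]
      linear_combination pf_two 0 (if w = b then (1 : ZMod 2) else 0)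

lemma pf_trail {V : Type*} [Finite V] [DecidableEq V] (H : SimpleGraph V) {x y : V} (p : H.Walk x y) :
    p.IsTrail → ∀ F : SimpleGraph V, (∀ e ∈ p.edges, e ∈ F.edgeSet) →
    ∃ F' : SimpleGraph V, F' ≤ F ∧ F'.edgeSet.ncard + p.length ≤ F.edgeSet.ncard ∧
      ∀ w, (fdeg F' w : ZMod 2) =
        (fdeg F w : ZMod 2) + ((if w = x then 1 else 0) + (if w = y then 1 else 0)) := by
  induction p with
  | nil =>
    intro _ F hF
    refine ⟨F, le_rfl, by simp, fun w => ?_⟩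
    rw [← add_assoc, pf_two]
  | @cons a b c h q ih =>
    intro ht F hF
    rw [SimpleGraph.Walk.isTrail_cons] at ht
    have hab : F.Adj a b := hF s(a, b) (by simp)
    obtain ⟨F1, hF1, hc, h1⟩ := ih ht.1 (F \ SimpleGraph.edge a b) (by
      intro e he
      rw [pf_edges' _ _ _ h.ne]
      refine ⟨hF e (by simp [he]), ?_⟩
      rintro rfl
      exact ht.2 he)
    refine ⟨F1, hF1.trans sdiff_le, ?_, fun w => ?_⟩
    · rw [pf_edges' _ _ _ h.ne] at hc
      have := Set.ncard_sdiff_singleton_add_one (s := F.edgeSet) (a := s(a, b)) hab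
        (Set.toFinite _)
      simp only [SimpleGraph.Walk.length_cons]
      omega
    · rw [h1, pf_del _ _ _ hab]
      linear_combination pf_two 0 (if w = b then (1 : ZMod 2) else 0)

lemma pf_min {V : Type*} [Finite V] [DecidableEq V] (H : SimpleGraph V) (g : V → ZMod 2)
    (hex : ∃ F ≤ H, ∀ w, (fdeg F w : ZMod 2) = g w) :
    ∃ F, IsSemiperfectForest H F ∧ ∀ w, (fdeg F w : ZMod 2) = g w := by
  classical
  have hex' : ∃ n, ∃ F ≤ H, (∀ w, (fdeg F w : ZMod 2) = g w) ∧ F.edgeSet.ncard = n := by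
    obtain ⟨F, h1, h2⟩ := hex
    exact ⟨_, F, h1, h2, rfl⟩
  obtain ⟨F, hF, hg, hn⟩ := Nat.find_spec hex'
  have hmin : ∀ F' ≤ H, (∀ w, (fdeg F' w : ZMod 2) = g w) →
      F.edgeSet.ncard ≤ F'.edgeSet.ncard := by
    intro F' h1 h2
    rw [hn]
    exact Nat.find_min' hex' ⟨F', h1, h2, rfl⟩
  refine ⟨F, ⟨hF, ?_, ?_⟩, hg⟩
  · intro x c hc
    obtain ⟨F', hle, hcard, hd⟩ := pf_trail F c hc.isTrail F
      (fun e he => c.edges_subset_edgeSet he)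
    have := hmin F' (hle.trans hF) (fun w => by rw [hd, ← add_assoc, pf_two, hg])
    have := hc.three_le_length
    omega
  · intro x y hr hadj
    by_contra hna
    obtain ⟨p, hp⟩ := hr.exists_isPath
    have hlen : 2 ≤ p.length := by
      by_contra hlt
      have : p.length = 0 ∨ p.length = 1 := by omega
      rcases this with h | h
      · exact hadj.ne (SimpleGraph.Walk.eq_of_length_eq_zero h)
      · exact hna (SimpleGraph.Walk.adj_of_length_eq_one h)
    obtain ⟨F', hle, hcard, hd⟩ := pf_trail F p hp.isTrail F
      (fun e he => p.edges_subset_edgeSet he)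
    have := hmin (F' ⊔ SimpleGraph.edge x y) (sup_le (hle.trans hF) (by
        intro c d hab
        rw [SimpleGraph.edge_adj] at hab
        rcases hab with ⟨⟨rfl, rfl⟩ | ⟨rfl, rfl⟩, _⟩
        · exact hadj
        · exact hadj.symm))
      (fun w => by
        rw [pf_add _ _ _ hadj.ne (fun h => hna (hle h)), hd, pf_two, hg])
    rw [pf_edges _ _ _ hadj.ne] at this
    have := Set.ncard_insert_le s(x, y) F'.edgeSet
    omega

lemma pf_exists {V : Type*} [Finite V] [DecidableEq V] (H : SimpleGraph V) (r : V) (S : Finset V)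
    (hS : ∀ w ∈ S, H.Reachable w r) :
    ∃ F ≤ H, ∀ w, (fdeg F w : ZMod 2) =
      ∑ s ∈ S, ((if w = s then 1 else 0) + (if w = r then 1 else 0)) := by
  induction S using Finset.induction_on with
  | empty => exact ⟨⊥, bot_le, fun w => by simp [fdeg]⟩
  | insert a S ha ih =>
    obtain ⟨F, hF, h⟩ := ih (fun w hw => hS w (by simp [hw]))
    obtain ⟨p⟩ := hS a (by simp)
    obtain ⟨F', hF', h'⟩ := pf_walk H p F hF
    refine ⟨F', hF', fun w => ?_⟩
    rw [h', h, Finset.sum_insert ha, add_comm]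

lemma pf_main {V : Type*} [Fintype V]
    (G : SimpleGraph V)
    (h2 : ∀ x : V, (G.induce (({x} : Set V)ᶜ)).Connected)
    (u v : V) (huv : G.Adj u v)
    (f : V → ℕ) (hf01 : ∀ w, f w ≤ 1) (hfsum : Even (∑ w, f w))
    (hf0 : f u = 0) :
    ∃ F : SimpleGraph V, IsSemiperfectForest G F ∧
      (∀ w : V, fdeg F w % 2 = f w) ∧ ¬ F.Adj u v := by
  classical
  let H : SimpleGraph V :=
    { Adj := fun x y => G.Adj x y ∧ x ≠ u ∧ y ≠ u
      symm := ⟨fun x y h => ⟨h.1.symm, h.2.2, h.2.1⟩⟩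
      loopless := ⟨fun x h => h.1.ne rfl⟩ }
  have hHG : H ≤ G := fun x y h => h.1
  have hreach : ∀ w, w ≠ u → H.Reachable w v := by
    intro w hw
    have := (h2 u).preconnected ⟨w, hw⟩ ⟨v, huv.ne'⟩
    let φ : (G.induce (({u} : Set V)ᶜ)) →g H :=
      { toFun := fun x => x.1
        map_rel' := fun {a b} h => ⟨h, a.2, b.2⟩ }
    exact this.map φ
  obtain ⟨F0, hF0, hd0⟩ := pf_exists H v (Finset.univ.filter (fun w => f w = 1)) (by
    intro w hw
    apply hreach
    rintro rfl
    simp [hf0] at hw)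
  have hval : ∀ w, (∑ s ∈ Finset.univ.filter (fun w => f w = 1),
      ((if w = s then 1 else 0) + (if w = v then 1 else 0)) : ZMod 2) = (f w : ZMod 2) := by
    intro w
    have hc : ((Finset.univ.filter (fun w => f w = 1)).card : ZMod 2) = 0 := by
      rw [ZMod.natCast_eq_zero_iff_even, Finset.card_filter]
      convert hfsum using 3 with w
      have := hf01 w
      split_ifs <;> omega
    rw [Finset.sum_add_distrib, Finset.sum_const, nsmul_eq_mul, hc, zero_mul, add_zero,
      Finset.sum_ite_eq]
    have := hf01 w
    have h : f w = 0 ∨ f w = 1 := by omega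
    rcases h with h | h <;> simp [h]
  obtain ⟨F, ⟨hFH, hac, hind⟩, hd⟩ := pf_min H (fun w => (f w : ZMod 2))
    ⟨F0, hF0, fun w => by rw [hd0, hval]⟩
  have hiso : ∀ y, F.Reachable u y → u = y := by
    rintro y ⟨p⟩
    cases p with
    | nil => rfl
    | cons h q => exact absurd rfl (hFH h).2.1
  refine ⟨F, ⟨hFH.trans hHG, hac, ?_⟩, ?_, fun h => (hFH h).2.1 rfl⟩
  · intro x y hr hxy
    refine hind x y hr ⟨hxy, ?_, ?_⟩
    · rintro rfl
      exact hxy.ne (hiso _ hr)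
    · rintro rfl
      exact hxy.ne (hiso _ hr.symm).symm
  · intro w
    have := (ZMod.natCast_eq_natCast_iff' _ _ 2).1 (hd w)
    have := hf01 w
    omega

/-- Let `G` be a 2-connected graph (at least 3 vertices, connected, and connected after
deleting any single vertex), let `e = uv ∈ E(G)`, and let `f : V → {0,1}` be even-sum.
If `f(u) = 0` or `f(v) = 0`, then `G` has an `f`-parity perfect forest not containing `e`. -/
theorem parity_forest_avoiding_edge_of_two_connected {V : Type*} [Fintype V]
    (G : SimpleGraph V) (h3 : 3 ≤ Fintype.card V) (hconn : G.Connected)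
    (h2 : ∀ x : V, (G.induce (({x} : Set V)ᶜ)).Connected)
    (u v : V) (huv : G.Adj u v)
    (f : V → ℕ) (hf01 : ∀ w, f w ≤ 1) (hfsum : Even (∑ w, f w))
    (hf0 : f u = 0 ∨ f v = 0) :
    ∃ F : SimpleGraph V, IsSemiperfectForest G F ∧
      (∀ w : V, fdeg F w % 2 = f w) ∧ ¬ F.Adj u v := by
  rcases hf0 with h | h
  · exact pf_main G h2 u v huv f hf01 hfsum h
  · obtain ⟨F, h1, h3, h4⟩ := pf_main G h2 v u huv.symm f hf01 hfsum h
    exact ⟨F, h1, h3, fun h => h4 h.symm⟩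
end

section
/- Let G be a graph and let e₁ = u₁v₁ and e₂ = u₂v₂ be distinct edges of G. Let H be the graph obtained from G by deleting the edge e₁ and then, for each vertex w ∈ V(G) \ {u₁, v₁}, adding a new vertex w' together with the pendant edge ww'. Then H has a 0-perfect forest containing the edge e₂ if and only if G has an induced cycle containing both e₁ and e₂. -/
open SimpleGraph

/-- The graph `H` obtained from `G` by deleting the edge `u₁v₁` and adding, for each
vertex `w ∉ {u₁, v₁}`, a new pendant vertex `w'` joined to `w` by an edge. -/
def pendantGraph {V : Type*} (G : SimpleGraph V) (u₁ v₁ : V) :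
    SimpleGraph (V ⊕ {w : V // w ≠ u₁ ∧ w ≠ v₁}) :=
  SimpleGraph.fromEdgeSet
    ({e : Sym2 (V ⊕ {w : V // w ≠ u₁ ∧ w ≠ v₁}) |
        ∃ a b : V, G.Adj a b ∧ s(a, b) ≠ s(u₁, v₁) ∧ e = s(Sum.inl a, Sum.inl b)} ∪
     {e : Sym2 (V ⊕ {w : V // w ≠ u₁ ∧ w ≠ v₁}) |
        ∃ w : {w : V // w ≠ u₁ ∧ w ≠ v₁}, e = s(Sum.inl (w : V), Sum.inr w)})

lemma zp_adj_ll {V : Type*} (G : SimpleGraph V) (u₁ v₁ x y : V) :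
    (pendantGraph G u₁ v₁).Adj (Sum.inl x) (Sum.inl y) ↔ G.Adj x y ∧ s(x, y) ≠ s(u₁, v₁) := by
  unfold pendantGraph
  rw [SimpleGraph.fromEdgeSet_adj]
  constructor
  · rintro ⟨h | h, hne⟩
    · obtain ⟨a, b, hab, h1, h2⟩ := h
      rw [Sym2.eq_iff] at h2
      rcases h2 with ⟨h2, h3⟩ | ⟨h2, h3⟩
      · cases h2; cases h3; exact ⟨hab, h1⟩
      · cases h2; cases h3; exact ⟨hab.symm, by rwa [Sym2.eq_swap]⟩
    · obtain ⟨w, hw⟩ := h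
      simp at hw
  · rintro ⟨h1, h2⟩
    exact ⟨Or.inl ⟨x, y, h1, h2, rfl⟩, by simpa using h1.ne⟩

lemma zp_adj_lr {V : Type*} (G : SimpleGraph V) (u₁ v₁ x : V) (w : {w : V // w ≠ u₁ ∧ w ≠ v₁}) :
    (pendantGraph G u₁ v₁).Adj (Sum.inl x) (Sum.inr w) ↔ x = w := by
  unfold pendantGraph
  rw [SimpleGraph.fromEdgeSet_adj]
  constructor
  · rintro ⟨h | h, hne⟩
    · obtain ⟨a, b, hab, h1, h2⟩ := h
      simp at h2
    · obtain ⟨w', hw⟩ := h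
      simp at hw
      obtain ⟨rfl, rfl⟩ := hw
      rfl
  · rintro rfl
    exact ⟨Or.inr ⟨w, rfl⟩, by simp⟩

lemma zp_adj_rr {V : Type*} (G : SimpleGraph V) (u₁ v₁ : V) (w w' : {w : V // w ≠ u₁ ∧ w ≠ v₁}) :
    ¬ (pendantGraph G u₁ v₁).Adj (Sum.inr w) (Sum.inr w') := by
  unfold pendantGraph
  rw [SimpleGraph.fromEdgeSet_adj]
  rintro ⟨h | h, hne⟩
  · obtain ⟨a, b, hab, h1, h2⟩ := h
    simp at h2
  · obtain ⟨w', hw⟩ := h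
    simp at hw

/-- In a forest, an edge between two vertices of a walk lies on that walk. -/
lemma zp_mem_edges {V : Type*} {F : SimpleGraph V} (hF : F.IsAcyclic) {a b x y : V}
    (p : F.Walk a b) (hx : x ∈ p.support) (hy : y ∈ p.support) (h : F.Adj x y) :
    s(x, y) ∈ p.edges := by
  classical
  have hb := isAcyclic_iff_forall_isBridge.1 hF (show s(x, y) ∈ F.edgeSet from h)
  rw [isBridge_iff_forall_walk_mem_edges] at hb
  have := hb ((p.takeUntil x hx).reverse.append (p.takeUntil y hy))
  rw [Walk.edges_append, List.mem_append, Walk.edges_reverse, List.mem_reverse] at this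
  rcases this with h | h
  · exact p.edges_takeUntil_subset_edges hx h
  · exact p.edges_takeUntil_subset_edges hy h

lemma zp_leaf {V : Type*} {F : SimpleGraph V} (hF : F.IsAcyclic) {a b : V}
    (p : F.Walk a b) (hp : p.IsPath) (hnil : ¬ p.Nil)
    (hmax : ∀ z, F.Adj b z → z ∈ p.support) : F.neighborSet b = {p.penultimate} := by
  ext z
  simp only [mem_neighborSet, Set.mem_singleton_iff]
  constructor
  · intro h
    have := zp_mem_edges hF p (p.end_mem_support) (hmax z h) h
    exact hp.eq_penultimate_of_mem_edges this
  · rintro rfl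
    exact (p.adj_penultimate hnil).symm

/-- Every edge of a finite forest lies on a path between two leaves. -/
lemma zp_maxpath {V : Type*} [Fintype V] {F : SimpleGraph V} (hF : F.IsAcyclic) {u v : V}
    (h : F.Adj u v) : ∃ (a b : V) (p : F.Walk a b), p.IsPath ∧ s(u, v) ∈ p.edges ∧ a ≠ b ∧
      (∃ z, F.neighborSet a = {z}) ∧ (∃ z, F.neighborSet b = {z}) := by
  classical
  let S : Set ℕ := {n | ∃ (a b : V) (p : F.Walk a b), p.IsPath ∧ s(u, v) ∈ p.edges ∧ p.length = n}
  have hne : S.Nonempty := by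
    refine ⟨1, u, v, Walk.cons h Walk.nil, ?_, by simp, by simp⟩
    simp [Walk.cons_isPath_iff, h.ne]
  have hfin : S.Finite := (Set.finite_lt_nat (Fintype.card V)).subset (by
    rintro n ⟨a, b, p, hp, -, rfl⟩
    exact hp.length_lt)
  obtain ⟨n, hn, hmax⟩ := hfin.exists_maximal hne
  obtain ⟨a, b, p, hp, he, rfl⟩ := hn
  have hnil : ¬ p.Nil := by
    intro h0
    rw [← Walk.edges_eq_nil] at h0
    simp [h0] at he
  have key : ∀ (a b : V) (q : F.Walk a b), q.IsPath → s(u, v) ∈ q.edges → q.length = p.length →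
      ∀ z, F.Adj b z → z ∈ q.support := by
    intro a b q hq hqe hl z hz
    by_contra hzs
    have h1 : q.length + 1 ∈ S := ⟨a, z, q.concat hz, hq.concat hzs hz, by
      simp [Walk.edges_concat, hqe], by simp⟩
    have := hmax h1 (by omega)
    omega
  refine ⟨a, b, p, hp, he, ?_, ?_, ?_⟩
  · rintro rfl
    exact hnil (Walk.isPath_iff_nil.1 hp)
  · exact ⟨_, zp_leaf hF p.reverse hp.reverse (by simpa using hnil)
      (key _ _ p.reverse hp.reverse (by simpa using he) (by simp))⟩
  · exact ⟨_, zp_leaf hF p hp hnil (key _ _ p hp he rfl)⟩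

lemma zp_forward {V : Type*} [Fintype V]
    (G : SimpleGraph V) (u₁ v₁ u₂ v₂ : V) (he₁ : G.Adj u₁ v₁)
    (F : SimpleGraph (V ⊕ {w : V // w ≠ u₁ ∧ w ≠ v₁}))
    (hF : IsSemiperfectForest (pendantGraph G u₁ v₁) F)
    (hodd : ∀ w, Odd (fdeg F w)) (he : F.Adj (Sum.inl u₂) (Sum.inl v₂)) :
    (∃ (a : V) (c : G.Walk a a), c.IsCycle ∧
        (∀ x y : V, x ∈ c.support → y ∈ c.support → G.Adj x y → s(x, y) ∈ c.edges) ∧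
        s(u₁, v₁) ∈ c.edges ∧ s(u₂, v₂) ∈ c.edges) := by
  classical
  obtain ⟨hle, hac, hind⟩ := hF
  let ι : V ↪ (V ⊕ {w : V // w ≠ u₁ ∧ w ≠ v₁}) := ⟨Sum.inl, Sum.inl_injective⟩
  let F' : SimpleGraph V := F.comap ι
  have hac' : F'.IsAcyclic := hac.of_comap ι
  have hadj : ∀ x y, F'.Adj x y ↔ F.Adj (Sum.inl x) (Sum.inl y) := fun x y => Iff.rfl
  have hpend : ∀ w : {w : V // w ≠ u₁ ∧ w ≠ v₁}, F.Adj (Sum.inl w.1) (Sum.inr w) := by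
    intro w
    have h1 : (F.neighborSet (Sum.inr w)).Nonempty := by
      by_contra h
      rw [Set.not_nonempty_iff_eq_empty] at h
      have := hodd (Sum.inr w)
      simp [fdeg, h] at this
    obtain ⟨z, hz⟩ := h1
    have hz : F.Adj (Sum.inr w) z := hz
    rcases z with z | z
    · have := (zp_adj_lr G u₁ v₁ z w).1 (hle hz.symm)
      subst this
      exact hz.symm
    · exact absurd (hle hz) (zp_adj_rr G u₁ v₁ w z)
  have hleaf : ∀ a, (∃ z, F'.neighborSet a = {z}) → a = u₁ ∨ a = v₁ := by
    rintro a ⟨z, hz⟩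
    by_contra hcon
    push Not at hcon
    have hN : F.neighborSet (Sum.inl a) = {Sum.inl z, Sum.inr ⟨a, hcon⟩} := by
      ext t
      rcases t with t | t
      · have : t ∈ F'.neighborSet a ↔ t = z := by rw [hz]; rfl
        simpa [hadj] using this
      · simp only [mem_neighborSet, Set.mem_insert_iff, Set.mem_singleton_iff, reduceCtorEq,
          false_or, Sum.inr.injEq]
        constructor
        · intro h
          have := (zp_adj_lr G u₁ v₁ a t).1 (hle h)
          exact Subtype.ext this.symm
        · rintro rfl
          exact hpend ⟨a, hcon⟩
    have := hodd (Sum.inl a)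
    rw [fdeg, hN, Set.ncard_pair (by simp)] at this
    exact absurd this (by decide)
  have hmain : ∃ p : F'.Walk v₁ u₁, p.IsPath ∧ s(u₂, v₂) ∈ p.edges := by
    obtain ⟨a, b, p, hp, hpe, hab, ha, hb⟩ := zp_maxpath hac' ((hadj u₂ v₂).2 he)
    rcases hleaf a ha with rfl | rfl <;> rcases hleaf b hb with rfl | rfl
    · exact absurd rfl hab
    · exact ⟨p.reverse, hp.reverse, by simpa using hpe⟩
    · exact ⟨p, hp, hpe⟩
    · exact absurd rfl hab
  obtain ⟨p, hp, hpe⟩ := hmain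
  have hle' : F' ≤ G := fun x y h => ((zp_adj_ll G u₁ v₁ x y).1 (hle h)).1
  have hreach : ∀ x y, F'.Reachable x y → F.Reachable (Sum.inl x) (Sum.inl y) := by
    intro x y h
    exact h.map (⟨Sum.inl, fun h => h⟩ : F' →g F)
  have hnot : s(u₁, v₁) ∉ p.edges := by
    intro h
    have h := p.adj_of_mem_edges h
    exact ((zp_adj_ll G u₁ v₁ _ _).1 (hle h)).2 rfl
  refine ⟨u₁, Walk.cons he₁ (p.mapLe hle'), ?_, ?_, by simp, ?_⟩
  · rw [Walk.cons_isCycle_iff]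
    refine ⟨hp.mapLe _, ?_⟩
    rwa [Walk.edges_mapLe_eq_edges]
  · intro x y hx hy hxy
    have hs : ∀ x, x ∈ (Walk.cons he₁ (p.mapLe hle')).support → x ∈ p.support := by
      intro x hx
      rw [Walk.support_cons, List.mem_cons, Walk.support_mapLe_eq_support] at hx
      rcases hx with rfl | hx
      · exact p.end_mem_support
      · exact hx
    rw [Walk.edges_cons, List.mem_cons, Walk.edges_mapLe_eq_edges]
    by_cases h : s(x, y) = s(u₁, v₁)
    · exact Or.inl h
    · right
      refine zp_mem_edges hac' p (hs x hx) (hs y hy) ?_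
      refine hind _ _ (hreach _ _ ?_) ((zp_adj_ll G u₁ v₁ x y).2 ⟨hxy, h⟩)
      exact (p.takeUntil x (hs x hx)).reachable.symm.trans (p.takeUntil y (hs y hy)).reachable
  · rw [Walk.edges_cons, List.mem_cons, Walk.edges_mapLe_eq_edges]
    exact Or.inr hpe

/-- A potential with at most one lower neighbour at each vertex forces acyclicity. -/
lemma zp_acyclic {V : Type*} (F : SimpleGraph V) (f : V → ℕ)
    (hf : ∀ x y z, F.Adj x y → F.Adj x z → f y ≤ f x → f z ≤ f x → y = z) : F.IsAcyclic := by
  classical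
  intro a c hc
  obtain ⟨x, hx, hmax⟩ := c.support.toFinset.exists_max_image f ⟨a, by simp⟩
  rw [List.mem_toFinset] at hx
  have hd := hc.rotate hx
  set d := c.rotate x hx with hdd
  have hm : ∀ y, y ∈ d.support → f y ≤ f x := by
    intro y hy
    apply hmax
    rw [List.mem_toFinset]
    exact (Walk.mem_support_rotate_iff c x hx).1 hy
  have hn : ¬ d.Nil := hd.not_nil
  exact hd.snd_ne_penultimate (hf x _ _ (d.adj_snd hn) (d.adj_penultimate hn).symm
    (hm _ (d.getVert_mem_support _)) (hm _ (d.getVert_mem_support _)))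

lemma zp_cycle {V : Type*} {G : SimpleGraph V} {u v a : V} (h : G.Adj u v) (c : G.Walk a a)
    (hc : c.IsCycle) (he : s(u, v) ∈ c.edges) :
    ∃ p : G.Walk v u, (Walk.cons h p).IsCycle ∧ (∀ e, e ∈ (Walk.cons h p).edges ↔ e ∈ c.edges) ∧
      (∀ x, x ∈ (Walk.cons h p).support ↔ x ∈ c.support) := by
  classical
  have key : ∀ d : G.Walk u u, d.IsCycle → d.snd = v → ∃ p : G.Walk v u, Walk.cons h p = d := by
    intro d hd hs
    cases d with
    | nil => exact absurd hd (by simp)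
    | cons h' q =>
      simp at hs
      subst hs
      exact ⟨q, rfl⟩
  have hu := c.fst_mem_support_of_mem_edges he
  have hd := hc.rotate hu
  have hde : ∀ e, e ∈ (c.rotate u hu).edges ↔ e ∈ c.edges := fun e =>
    (c.rotate_edges u hu).mem_iff
  have hds : ∀ x, x ∈ (c.rotate u hu).support ↔ x ∈ c.support := fun x =>
    Walk.mem_support_rotate_iff c u hu
  generalize c.rotate u hu = d at hd hde hds
  have hv : d.snd = v ∨ d.reverse.snd = v := by
    have h1 := (hde _).2 he
    rw [← Walk.adj_toSubgraph_iff_mem_edges] at h1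
    have h2 := hd.neighborSet_toSubgraph_endpoint
    have h3 : v ∈ d.toSubgraph.neighborSet u := h1
    rw [h2] at h3
    simp only [Set.mem_insert_iff, Set.mem_singleton_iff] at h3
    rw [Walk.snd_reverse]
    tauto
  rcases hv with hv | hv
  · obtain ⟨p, hp⟩ := key d hd hv
    refine ⟨p, hp ▸ hd, ?_, ?_⟩
    · rw [hp]; exact hde
    · rw [hp]; exact hds
  · obtain ⟨p, hp⟩ := key d.reverse hd.reverse hv
    refine ⟨p, hp ▸ hd.reverse, ?_, ?_⟩
    · rw [hp]; simpa using hde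
    · rw [hp]; simpa using hds

/-- The forest built from a path. -/
def zpF {V : Type*} {G : SimpleGraph V} {u₁ v₁ : V} (p : G.Walk v₁ u₁) :
    SimpleGraph (V ⊕ {w : V // w ≠ u₁ ∧ w ≠ v₁}) where
  Adj a b := match a, b with
    | Sum.inl x, Sum.inl y => s(x, y) ∈ p.edges
    | Sum.inl x, Sum.inr w => x = w
    | Sum.inr w, Sum.inl x => x = w
    | Sum.inr _, Sum.inr _ => False
  symm := ⟨by
    rintro (x | x) (y | y) h
    · have h : s(x, y) ∈ p.edges := h
      rw [Sym2.eq_swap] at h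
      exact h
    · exact h
    · exact h
    · exact h⟩
  loopless := ⟨by
    rintro (x | x) h
    · exact (p.adj_of_mem_edges h).ne rfl
    · exact h⟩

lemma zp_backward {V : Type*} [Fintype V]
    (G : SimpleGraph V) (u₁ v₁ u₂ v₂ : V)
    (he₁ : G.Adj u₁ v₁) (hne : s(u₁, v₁) ≠ s(u₂, v₂))
    (p : G.Walk v₁ u₁) (hc : (Walk.cons he₁ p).IsCycle)
    (hind : ∀ x y : V, x ∈ p.support → y ∈ p.support → G.Adj x y → s(x, y) ≠ s(u₁, v₁) →
      s(x, y) ∈ p.edges) (he : s(u₂, v₂) ∈ p.edges) :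
    IsSemiperfectForest (pendantGraph G u₁ v₁) (zpF p) ∧
        (∀ w, Odd (fdeg (zpF p) w)) ∧ (zpF p).Adj (Sum.inl u₂) (Sum.inl v₂) := by
  classical
  have hp := (Walk.cons_isCycle_iff _ _).1 hc
  obtain ⟨hp, hnot⟩ := hp
  refine ⟨⟨?_, ?_, ?_⟩, ?_, he⟩
  · rintro (x | x) (y | y) h
    · have h : s(x, y) ∈ p.edges := h
      exact (zp_adj_ll G u₁ v₁ x y).2 ⟨p.adj_of_mem_edges h, fun h' => hnot (h' ▸ h)⟩
    · exact (zp_adj_lr G u₁ v₁ _ _).2 h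
    · exact ((zp_adj_lr G u₁ v₁ _ _).2 h).symm
    · exact h.elim
  · have hidx : ∀ i, i ≤ p.length → p.support.idxOf (p.getVert i) = i := by
      intro i hi
      have h1 := p.getVert_support_idxOf (p.getVert_mem_support i)
      have h2 := List.idxOf_lt_length_of_mem (p.getVert_mem_support i)
      rw [Walk.length_support] at h2
      exact hp.getVert_injOn (by simp; omega) (by simpa using hi) h1
    have hlow : ∀ x y, s(x, y) ∈ p.edges → p.support.idxOf y ≤ p.support.idxOf x →
        ∃ i, i < p.length ∧ y = p.getVert i ∧ x = p.getVert (i + 1) := by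
      intro x y h hl
      obtain ⟨i, hi, h⟩ := p.mk_mem_edges_iff_exists.1 h
      rw [Sym2.eq_iff] at h
      rcases h with ⟨rfl, rfl⟩ | ⟨rfl, rfl⟩
      · rw [hidx i (by omega), hidx (i + 1) (by omega)] at hl
        omega
      · exact ⟨i, hi, rfl, rfl⟩
    refine zp_acyclic _ (Sum.elim (fun x => p.support.idxOf x) (fun _ => p.length + 2)) ?_
    have hb : ∀ x, p.support.idxOf x < p.length + 2 := by
      intro x
      have : p.support.idxOf x ≤ p.support.length := List.idxOf_le_length
      rw [Walk.length_support] at this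
      omega
    rintro (x | x) (y | y) (z | z) h1 h2 h3 h4
    · obtain ⟨i, hi, rfl, hx⟩ := hlow x y h1 h3
      obtain ⟨j, hj, rfl, hx'⟩ := hlow x z h2 h4
      have h5 := hidx (i + 1) (by omega)
      have h6 := hidx (j + 1) (by omega)
      rw [← hx] at h5
      rw [← hx'] at h6
      have : i = j := by omega
      rw [this]
    · simp at h4; have := hb x; omega
    · simp at h3; have := hb x; omega
    · simp at h3; have := hb x; omega
    · have h1 : y = x := h1
      have h2 : z = x := h2
      rw [h1, h2]
    · exact h2.elim
    · exact h1.elim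
    · exact h1.elim
  · let g0 : V → Option V := fun x => if x ∈ p.support then none else some x
    let g : (V ⊕ {w : V // w ≠ u₁ ∧ w ≠ v₁}) → Option V := Sum.elim g0 (fun w => g0 w)
    have hg : ∀ a b, (zpF p).Adj a b → g a = g b := by
      rintro (x | x) (y | y) h
      · have h : s(x, y) ∈ p.edges := h
        simp [g, g0, p.fst_mem_support_of_mem_edges h, p.snd_mem_support_of_mem_edges h]
      · have h : x = y := h
        simp [g, h]
      · have h : y = x := h
        simp [g, h]
      · exact h.elim
    have hgr : ∀ a b, (zpF p).Reachable a b → g a = g b := by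
      rintro a b ⟨q⟩
      induction q with
      | nil => rfl
      | cons h q ih => exact (hg _ _ h).trans ih
    rintro (x | x) (y | y) hr h
    · rw [zp_adj_ll] at h
      have := hgr _ _ hr
      simp only [g, g0, Sum.elim_inl] at this
      by_cases hx : x ∈ p.support
      · by_cases hy : y ∈ p.support
        · exact hind x y hx hy h.1 h.2
        · simp [hx, hy] at this
      · by_cases hy : y ∈ p.support
        · simp [hx, hy] at this
        · simp [hx, hy] at this
          exact absurd this h.1.ne
    · exact (zp_adj_lr G u₁ v₁ _ _).1 h
    · exact (zp_adj_lr G u₁ v₁ _ _).1 h.symm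
    · exact absurd h (zp_adj_rr G u₁ v₁ _ _)
  · have hcdeg : ∀ x, x ∈ p.support → ((Walk.cons he₁ p).toSubgraph.neighborSet x).ncard = 2 :=
      fun x hx => hc.ncard_neighborSet_toSubgraph_eq_two (by simp [hx])
    have hcN : ∀ x y, y ∈ (Walk.cons he₁ p).toSubgraph.neighborSet x ↔
        s(x, y) = s(u₁, v₁) ∨ s(x, y) ∈ p.edges := by
      intro x y
      rw [Subgraph.mem_neighborSet, Walk.adj_toSubgraph_iff_mem_edges, Walk.edges_cons,
        List.mem_cons]
    have hend : ∀ x x', s(x, x') = s(u₁, v₁) → x ∈ p.support →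
        Odd (fdeg (zpF p) (Sum.inl x)) := by
      intro x x' hxx hx
      have hx2 : x = u₁ ∨ x = v₁ := by
        rw [Sym2.eq_iff] at hxx
        tauto
      have : (zpF p).neighborSet (Sum.inl x) =
          Sum.inl '' ((Walk.cons he₁ p).toSubgraph.neighborSet x \ {x'}) := by
        ext t
        rcases t with t | t
        · have h1 : (Sum.inl t ∈ (zpF p).neighborSet (Sum.inl x)) ↔ s(x, t) ∈ p.edges := Iff.rfl
          rw [h1, Function.Injective.mem_set_image Sum.inl_injective, Set.mem_sdiff, hcN,
            Set.mem_singleton_iff]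
          constructor
          · intro h
            refine ⟨Or.inr h, ?_⟩
            rintro rfl
            exact hnot (hxx ▸ h)
          · rintro ⟨h | h, h2⟩
            · rw [← hxx] at h
              exact absurd (Sym2.congr_right.1 h) h2
            · exact h
        · have h1 : (Sum.inr t ∈ (zpF p).neighborSet (Sum.inl x)) ↔ x = t := Iff.rfl
          rw [h1]
          constructor
          · rintro rfl
            exact (hx2.elim t.2.1 t.2.2).elim
          · rintro ⟨_, _, h⟩
            exact absurd h (by simp)
      rw [fdeg, this, Set.ncard_image_of_injective _ Sum.inl_injective,
        Set.ncard_sdiff_singleton_of_mem ((hcN x x').2 (Or.inl hxx)), hcdeg x hx]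
      decide
    rintro (x | w)
    · by_cases hu : x = u₁
      · subst hu
        exact hend x v₁ rfl p.end_mem_support
      by_cases hv : x = v₁
      · subst hv
        exact hend x u₁ Sym2.eq_swap p.start_mem_support
      have hN : (zpF p).neighborSet (Sum.inl x) =
          insert (Sum.inr ⟨x, hu, hv⟩)
            (Sum.inl '' ((Walk.cons he₁ p).toSubgraph.neighborSet x)) := by
        ext t
        rcases t with t | t
        · have h1 : (Sum.inl t ∈ (zpF p).neighborSet (Sum.inl x)) ↔ s(x, t) ∈ p.edges := Iff.rfl
          rw [h1, Set.mem_insert_iff, Function.Injective.mem_set_image Sum.inl_injective, hcN]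
          constructor
          · intro h
            exact Or.inr (Or.inr h)
          · rintro (h | h | h)
            · exact absurd h (by simp)
            · rw [Sym2.eq_iff] at h
              tauto
            · exact h
        · have h1 : (Sum.inr t ∈ (zpF p).neighborSet (Sum.inl x)) ↔ x = t := Iff.rfl
          rw [h1]
          constructor
          · rintro rfl
            exact Or.inl rfl
          · rintro (h | ⟨_, _, h⟩)
            · cases h; rfl
            · exact absurd h (by simp)
      rw [fdeg, hN, Set.ncard_insert_of_notMem (by simp) (Set.toFinite _),
        Set.ncard_image_of_injective _ Sum.inl_injective]
      by_cases hx : x ∈ p.support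
      · rw [hcdeg x hx]
        decide
      · have : (Walk.cons he₁ p).toSubgraph.neighborSet x = ∅ := by
          rw [Set.eq_empty_iff_forall_notMem]
          intro y hy
          rw [hcN] at hy
          rcases hy with h | h
          · rw [Sym2.eq_iff] at h
            tauto
          · exact hx (p.fst_mem_support_of_mem_edges h)
        rw [this]
        simp
    · have hN : (zpF p).neighborSet (Sum.inr w) = {Sum.inl w.1} := by
        ext t
        rcases t with t | t
        · have h1 : (Sum.inl t ∈ (zpF p).neighborSet (Sum.inr w)) ↔ t = w := Iff.rfl
          rw [h1]
          simp
        · have h1 : (Sum.inr t ∈ (zpF p).neighborSet (Sum.inr w)) ↔ False := Iff.rfl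
          rw [h1]
          simp
      rw [fdeg, hN, Set.ncard_singleton]
      decide

/-- Let `e₁ = u₁v₁` and `e₂ = u₂v₂` be distinct edges of `G`, and let `H` be obtained
from `G` by deleting `e₁` and adding a pendant edge at every vertex other than `u₁, v₁`.
Then `H` has a 0-perfect forest containing `e₂` if and only if `G` has an induced cycle
containing both `e₁` and `e₂`. -/
theorem zero_perfect_forest_containing_edge_iff_induced_cycle {V : Type*} [Fintype V]
    (G : SimpleGraph V) (u₁ v₁ u₂ v₂ : V)
    (he₁ : G.Adj u₁ v₁) (he₂ : G.Adj u₂ v₂) (hne : s(u₁, v₁) ≠ s(u₂, v₂)) :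
    (∃ F : SimpleGraph (V ⊕ {w : V // w ≠ u₁ ∧ w ≠ v₁}),
        IsSemiperfectForest (pendantGraph G u₁ v₁) F ∧
        (∀ w, Odd (fdeg F w)) ∧ F.Adj (Sum.inl u₂) (Sum.inl v₂)) ↔
    (∃ (a : V) (c : G.Walk a a), c.IsCycle ∧
        (∀ x y : V, x ∈ c.support → y ∈ c.support → G.Adj x y → s(x, y) ∈ c.edges) ∧
        s(u₁, v₁) ∈ c.edges ∧ s(u₂, v₂) ∈ c.edges) := by
  constructor
  · rintro ⟨F, hF, hodd, he⟩
    exact zp_forward G u₁ v₁ u₂ v₂ he₁ F hF hodd he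
  · rintro ⟨a, c, hc, hind, h1, h2⟩
    obtain ⟨p, hp, hpe, hps⟩ := zp_cycle he₁ c hc h1
    refine ⟨zpF p, zp_backward G u₁ v₁ u₂ v₂ he₁ hne p hp ?_ ?_⟩
    · intro x y hx hy hxy hn
      have h := (hpe _).2 (hind x y ((hps x).1 (by simp [hx])) ((hps y).1 (by simp [hy])) hxy)
      rw [Walk.edges_cons, List.mem_cons] at h
      exact h.resolve_left hn
    · have h := (hpe _).2 h2
      rw [Walk.edges_cons, List.mem_cons] at h
      exact h.resolve_left hne.symm
end

section
/- Let G be a connected graph, let u ∈ V(G), and let G' be the graph obtained from G by adding two new vertices x and y together with the edges xy and yu. Then, for any integer k ≥ 0, G has a 0-perfect forest with |V(G)| − k edges if and only if G' has a 0-perfect forest with |V(G')| − (k+1) edges. -/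
open SimpleGraph

/-- The graph `G'` obtained from `G` by adding two new vertices `x = Sum.inr 0` and
`y = Sum.inr 1` together with the edges `xy` and `yu`. -/
def addTwoVerts {V : Type*} (G : SimpleGraph V) (u : V) : SimpleGraph (V ⊕ Fin 2) :=
  SimpleGraph.fromEdgeSet
    ({e : Sym2 (V ⊕ Fin 2) | ∃ a b : V, G.Adj a b ∧ e = s(Sum.inl a, Sum.inl b)} ∪
     {s(Sum.inr 0, Sum.inr 1), s(Sum.inr 1, Sum.inl u)})


theorem reach_map {V W : Type*} {A : SimpleGraph V} {B : SimpleGraph W} (f : V → W)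
    (h : ∀ a b, A.Adj a b → B.Reachable (f a) (f b)) {a b : V} (r : A.Reachable a b) :
    B.Reachable (f a) (f b) := by
  obtain ⟨p⟩ := r
  induction p with
  | nil => exact Reachable.refl _
  | cons e _ ih => exact (h _ _ e).trans ih

theorem reach_inl {V : Type*} {F : SimpleGraph V} {H : SimpleGraph (Fin 2)} {a b : V}
    (r : (F ⊕g H).Reachable (.inl a) (.inl b)) : F.Reachable a b := by
  refine reach_map (Sum.elim id (fun _ => a)) ?_ r
  rintro (p | p) (q | q) h <;> simp at h ⊢
  exact h.reachable

theorem sum_acyclic {V : Type*} {F : SimpleGraph V} (hF : F.IsAcyclic) :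
    (F ⊕g (⊤ : SimpleGraph (Fin 2))).IsAcyclic := by
  rw [isAcyclic_iff_forall_adj_isBridge] at hF ⊢
  rintro (a | a) (b | b) h
  · rw [sum_adj_inl] at h
    have := hF h
    rw [isBridge_iff] at this ⊢
    intro r
    apply this
    refine reach_map (Sum.elim id (fun _ => a)) ?_ r
    rintro (p | p) (q | q) h <;> simp at h ⊢
    apply Adj.reachable
    simpa using h
  · simp at h
  · simp at h
  · rw [sum_adj_inr] at h
    rw [isBridge_iff]
    intro r
    have : (⊥ : SimpleGraph (Fin 2)).Reachable a b := by
      refine reach_map (Sum.elim (fun _ => a) id) ?_ r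
      rintro (p | p) (q | q) h' <;> simp at h h' ⊢
      omega
    simp at this h
    exact h this

theorem atv_ll {V : Type*} (G : SimpleGraph V) (u a b : V) :
    (addTwoVerts G u).Adj (.inl a) (.inl b) ↔ G.Adj a b := by
  simp only [addTwoVerts, fromEdgeSet_adj]
  constructor
  · rintro ⟨h, -⟩
    simp at h
    obtain ⟨c, d, h, (⟨rfl, rfl⟩ | ⟨rfl, rfl⟩)⟩ := h
    · exact h
    · exact h.symm
  · intro h
    exact ⟨Or.inl ⟨a, b, h, rfl⟩, by simpa using h.ne⟩

theorem atv_rl {V : Type*} (G : SimpleGraph V) (u b : V) (i : Fin 2) :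
    (addTwoVerts G u).Adj (.inr i) (.inl b) ↔ i = 1 ∧ b = u := by
  simp [addTwoVerts]

theorem atv_rr {V : Type*} (G : SimpleGraph V) (u : V) (i j : Fin 2) :
    (addTwoVerts G u).Adj (.inr i) (.inr j) ↔ i ≠ j := by
  simp [addTwoVerts]
  omega

theorem semi_iff {V : Type*} (G F : SimpleGraph V) (u : V) :
    IsSemiperfectForest (addTwoVerts G u) (F ⊕g (⊤ : SimpleGraph (Fin 2))) ↔
      IsSemiperfectForest G F := by
  constructor
  · rintro ⟨h1, h2, h3⟩
    refine ⟨fun a b h => ?_, ?_, fun a b r h => ?_⟩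
    · exact (atv_ll G u a b).1 (h1 (sum_adj_inl.2 h))
    · exact IsAcyclic.comap (Embedding.sumInl (G := F) (H := ⊤)).toHom
        (Embedding.sumInl (G := F) (H := ⊤)).injective h2
    · exact sum_adj_inl.1 (h3 _ _ (r.map (Embedding.sumInl (G := F) (H := ⊤)).toHom)
        ((atv_ll G u a b).2 h))
  · rintro ⟨h1, h2, h3⟩
    refine ⟨?_, sum_acyclic h2, ?_⟩
    · rintro (a | a) (b | b) h
      · exact (atv_ll G u a b).2 (h1 (sum_adj_inl.1 h))
      · simp at h
      · simp at h
      · exact (atv_rr G u a b).2 (by simpa using h)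
    · rintro (a | a) (b | b) r h
      · exact sum_adj_inl.2 (h3 _ _ (reach_inl r) ((atv_ll G u a b).1 h))
      · exact absurd r (not_reachable_sum_inl_inr _ _)
      · exact absurd r.symm (not_reachable_sum_inl_inr _ _)
      · simpa using (atv_rr G u a b).1 h

theorem odd_iff {V : Type*} (F : SimpleGraph V) :
    (∀ v, Odd (fdeg (F ⊕g (⊤ : SimpleGraph (Fin 2))) v)) ↔ ∀ v, Odd (fdeg F v) := by
  have hl : ∀ v, fdeg (F ⊕g (⊤ : SimpleGraph (Fin 2))) (.inl v) = fdeg F v := fun v => by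
    rw [fdeg, neighborSet_sum_inl, Set.ncard_image_of_injective _ Sum.inl_injective, fdeg]
  have hr : ∀ i, fdeg (F ⊕g (⊤ : SimpleGraph (Fin 2))) (.inr i) = 1 := fun v => by
    rw [fdeg, neighborSet_sum_inr, Set.ncard_image_of_injective _ Sum.inr_injective,
      Set.ncard_eq_one]
    refine ⟨1 - v, ?_⟩
    ext w
    simp
    omega
  simp [hl, hr]

theorem ncard_sum {V : Type*} [Finite V] (F : SimpleGraph V) :
    (F ⊕g (⊤ : SimpleGraph (Fin 2))).edgeSet.ncard = F.edgeSet.ncard + 1 := by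
  rw [← Nat.card_coe_set_eq, Nat.card_congr edgeSetSumEquiv, Nat.card_sum, Nat.card_coe_set_eq]
  congr 1
  rw [Nat.card_coe_set_eq, Set.ncard_eq_one]
  refine ⟨s(0, 1), ?_⟩
  ext e
  induction e with | _ a b
  simp
  omega

theorem eq_sum {V : Type*} (G : SimpleGraph V) (u : V) (F' : SimpleGraph (V ⊕ Fin 2))
    (hle : F' ≤ addTwoVerts G u) (ho : ∀ v, Odd (fdeg F' v)) :
    F' = (F'.comap Sum.inl) ⊕g (⊤ : SimpleGraph (Fin 2)) := by
  have h01 : F'.Adj (.inr 0) (.inr 1) := by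
    have h := ho (.inr 0)
    by_contra hn
    have : F'.neighborSet (.inr 0) = ∅ := by
      ext (b | b)
      · simp only [mem_neighborSet, Set.mem_empty_iff_false, iff_false]
        intro h
        have := (atv_rl G u b 0).1 (hle h)
        simp at this
      · simp only [mem_neighborSet, Set.mem_empty_iff_false, iff_false]
        intro h
        have := (atv_rr G u 0 b).1 (hle h)
        have : b = 1 := by omega
        subst this
        exact hn h
    simp [fdeg, this] at h
  have h1u : ¬ F'.Adj (.inr 1) (.inl u) := by
    intro hu
    have h := ho (.inr 1)
    have : F'.neighborSet (.inr 1) = {.inr 0, .inl u} := by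
      ext (b | b)
      · simp only [mem_neighborSet, Set.mem_insert_iff, Set.mem_singleton_iff, reduceCtorEq,
          false_or, Sum.inl.injEq]
        exact ⟨fun h => ((atv_rl G u b 1).1 (hle h)).2, fun h => h ▸ hu⟩
      · simp only [mem_neighborSet, Set.mem_insert_iff, Set.mem_singleton_iff, reduceCtorEq,
          or_false, Sum.inr.injEq]
        refine ⟨fun h => ?_, fun h => h ▸ h01.symm⟩
        have := (atv_rr G u 1 b).1 (hle h)
        omega
    rw [fdeg, this, Set.ncard_pair (by simp)] at h
    exact absurd h (by decide)
  have hrl : ∀ i b, ¬ F'.Adj (.inr i) (.inl b) := by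
    intro i b h
    obtain ⟨rfl, rfl⟩ := (atv_rl G u b i).1 (hle h)
    exact h1u h
  ext (a | a) (b | b)
  · simp
  · simpa using fun h => hrl _ _ h.symm
  · simpa using hrl _ _
  · simp only [sum_adj_inr, top_adj]
    refine ⟨fun h => (atv_rr G u a b).1 (hle h), fun h => ?_⟩
    fin_cases a <;> fin_cases b <;> simp at h ⊢
    · exact h01
    · exact h01.symm

/-- Let `G` be a connected graph, `u ∈ V(G)`, and let `G'` be obtained from `G` by adding
two new vertices `x, y` and the edges `xy` and `yu`. For any `k ≥ 0`, `G` has a 0-perfect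
forest with `|V(G)| − k` edges iff `G'` has a 0-perfect forest with `|V(G')| − (k+1)` edges. -/
theorem zero_perfect_forest_edge_count_transfer {V : Type*} [Fintype V]
    (G : SimpleGraph V) (hG : G.Connected) (u : V) (k : ℕ) :
    (∃ F : SimpleGraph V, IsSemiperfectForest G F ∧ (∀ v : V, Odd (fdeg F v)) ∧
        F.edgeSet.ncard = Fintype.card V - k) ↔
    (∃ F' : SimpleGraph (V ⊕ Fin 2), IsSemiperfectForest (addTwoVerts G u) F' ∧
        (∀ v, Odd (fdeg F' v)) ∧
        F'.edgeSet.ncard = Fintype.card (V ⊕ Fin 2) - (k + 1)) := by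
  constructor
  · rintro ⟨F, h1, h2, h3⟩
    refine ⟨F ⊕g ⊤, (semi_iff G F u).2 h1, (odd_iff F).2 h2, ?_⟩
    rw [ncard_sum, Fintype.card_sum, Fintype.card_fin]
    have : 0 < F.edgeSet.ncard := by
      rw [Set.ncard_pos]
      have h := (h2 u).pos
      rw [fdeg, Set.ncard_pos] at h
      obtain ⟨w, hw⟩ := h
      exact ⟨s(u, w), hw⟩
    omega
  · rintro ⟨F', h1, h2, h3⟩
    have e := eq_sum G u F' h1.1 h2
    generalize F'.comap Sum.inl = F at e
    subst e
    refine ⟨F, (semi_iff G F u).1 h1, (odd_iff F).1 h2, ?_⟩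
    rw [ncard_sum, Fintype.card_sum, Fintype.card_fin] at h3
    omega
end

section
/- Let G be a 2-connected graph and let u, v, w be three distinct vertices of G. Then there exists a path in G from u to v that passes through w. -/
open SimpleGraph

lemma aux_hit {V : Type*} (G : SimpleGraph V) (S : Set V) {a b : V} (q : G.Walk a b) (hb : b ∈ S) :
    ∃ x ∈ S, ∃ r : G.Walk a x, r.IsPath ∧ r.support ⊆ q.support ∧
      ∀ y ∈ r.support, y ∈ S → y = x := by
  classical
  suffices h : ∃ x ∈ S, ∃ r : G.Walk a x, r.support ⊆ q.support ∧
      ∀ y ∈ r.support, y ∈ S → y = x by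
    obtain ⟨x, hx, r, h1, h2⟩ := h
    exact ⟨x, hx, r.bypass, r.bypass_isPath, fun y hy => h1 (r.support_bypass_subset_support hy),
      fun y hy => h2 y (r.support_bypass_subset_support hy)⟩
  induction q with
  | nil => exact ⟨_, hb, Walk.nil, by simp, by simp⟩
  | @cons a c b h q ih =>
    by_cases ha : a ∈ S
    · exact ⟨a, ha, Walk.nil, by simp, by simp⟩
    · obtain ⟨x, hx, r, h1, h2⟩ := ih hb
      refine ⟨x, hx, Walk.cons h r, ?_, ?_⟩
      · simp only [Walk.support_cons]
        exact List.cons_subset_cons _ h1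
      · intro y hy hyS
        simp only [Walk.support_cons, List.mem_cons] at hy
        rcases hy with rfl | hy
        · exact absurd hyS ha
        · exact h2 y hy hyS

lemma aux_reroute {V : Type*} (G : SimpleGraph V) {u x w v : V} (p1 : G.Walk u x)
    (p2 : G.Walk x w) (p3 : G.Walk w v) (r : G.Walk x w) (hxw : x ≠ w)
    (hp : (p1.append (p2.append p3)).IsPath) (hr : r.IsPath)
    (hd : ∀ y ∈ r.support, y ∈ (p1.append (p2.append p3)).support → y = x ∨ y = w) :
    (p1.append (r.append p3)).IsPath := by
  have e1 := p2.end_mem_support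
  rw [← Walk.cons_tail_support p2] at e1
  have e2 := p1.end_mem_support
  have hr' := hr
  rw [Walk.isPath_def, ← Walk.cons_tail_support r] at hr'
  have m1 : ∀ y ∈ r.support.tail, y ∈ r.support := fun y => List.mem_of_mem_tail
  have m3 : ∀ y ∈ p3.support.tail, y ∈ p3.support := fun y => List.mem_of_mem_tail
  simp only [Walk.mem_support_append_iff] at hd
  rw [Walk.isPath_def, Walk.support_append, Walk.tail_support_append] at hp ⊢
  simp only [List.nodup_append, List.mem_append, List.nodup_cons, List.mem_cons] at *
  grind

lemma aux_step {V : Type*} (G : SimpleGraph V)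
    (h2 : ∀ x : V, (G.induce (({x} : Set V)ᶜ)).Connected)
    (u v w z : V) (huv : u ≠ v) (hwz : G.Adj w z)
    (h : ∃ p : G.Walk u v, p.IsPath ∧ w ∈ p.support) :
    ∃ p : G.Walk u v, p.IsPath ∧ z ∈ p.support := by
  classical
  obtain ⟨p, hp, hw⟩ := h
  by_cases hz : z ∈ p.support
  · exact ⟨p, hp, hz⟩
  obtain ⟨t, ht, htw⟩ : ∃ t ∈ p.support, t ≠ w := by
    by_cases hu : u = w
    · exact ⟨v, p.end_mem_support, fun e => huv (hu.trans e.symm)⟩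
    · exact ⟨u, p.start_mem_support, hu⟩
  obtain ⟨q0⟩ := (h2 w).preconnected ⟨z, by simpa using hwz.ne'⟩ ⟨t, by simpa using htw⟩
  obtain ⟨q, hq⟩ : ∃ q : G.Walk z t, w ∉ q.support := by
    refine ⟨q0.map (Embedding.induce _).toHom, ?_⟩
    erw [Walk.support_map]
    simp only [List.mem_map, not_exists, not_and]
    rintro ⟨y, hy⟩ - e
    exact hy e
  obtain ⟨x, hx, r, hr, hrq, hrS⟩ := aux_hit G {y | y ∈ p.support} q ht
  have hwr : w ∉ r.support := fun h => hq (hrq h)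
  have hxw : x ≠ w := fun e => hwr (e ▸ r.end_mem_support)
  have hR : (Walk.cons hwz r).IsPath := by
    rw [Walk.cons_isPath_iff]; exact ⟨hr, hwr⟩
  have hd : ∀ y ∈ (Walk.cons hwz r).support, y ∈ p.support → y = w ∨ y = x := by
    intro y hy hyp
    simp only [Walk.support_cons, List.mem_cons] at hy
    exact hy.imp id (fun h => hrS y h hyp)
  have hzR : z ∈ (Walk.cons hwz r).support := by simp
  generalize Walk.cons hwz r = R at hR hd hzR
  have hx' : x ∈ p.support := hx
  rw [← p.take_spec hw, Walk.mem_support_append_iff] at hx'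
  rcases hx' with hx' | hx'
  · have e : p = ((p.takeUntil w hw).takeUntil x hx').append
        (((p.takeUntil w hw).dropUntil x hx').append (p.dropUntil w hw)) := by
      rw [Walk.append_assoc, Walk.take_spec, Walk.take_spec]
    refine ⟨_, aux_reroute G ((p.takeUntil w hw).takeUntil x hx') ((p.takeUntil w hw).dropUntil x hx')
      (p.dropUntil w hw) R.reverse hxw (e ▸ hp) hR.reverse ?_, ?_⟩
    · rw [← e]
      intro y hy hyp
      exact (hd y (by simpa using hy) hyp).symm
    · simp [Walk.mem_support_append_iff, hzR]
  · have e : p = (p.takeUntil w hw).append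
        (((p.dropUntil w hw).takeUntil x hx').append ((p.dropUntil w hw).dropUntil x hx')) := by
      rw [Walk.take_spec, Walk.take_spec]
    refine ⟨_, aux_reroute G (p.takeUntil w hw) ((p.dropUntil w hw).takeUntil x hx')
      ((p.dropUntil w hw).dropUntil x hx') R hxw.symm (e ▸ hp) hR ?_, ?_⟩
    · rw [← e]
      exact hd
    · simp [Walk.mem_support_append_iff, hzR]

/-- Let `G` be a 2-connected graph (at least 3 vertices, connected, and connected after
deleting any single vertex) and let `u, v, w` be three distinct vertices of `G`.
Then there exists a path in `G` from `u` to `v` passing through `w`. -/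
theorem two_connected_path_through_vertex {V : Type*} [Fintype V]
    (G : SimpleGraph V) (h3 : 3 ≤ Fintype.card V) (hconn : G.Connected)
    (h2 : ∀ x : V, (G.induce (({x} : Set V)ᶜ)).Connected)
    (u v w : V) (huv : u ≠ v) (huw : u ≠ w) (hvw : v ≠ w) :
    ∃ p : G.Walk u v, p.IsPath ∧ w ∈ p.support := by
  classical
  have key : ∀ (a b : V) (_ : G.Walk a b), (∃ p : G.Walk u v, p.IsPath ∧ a ∈ p.support) →
      ∃ p : G.Walk u v, p.IsPath ∧ b ∈ p.support := by
    intro a b q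
    induction q with
    | nil => exact id
    | cons h q ih => exact fun hp => ih (aux_step G h2 u v _ _ huv h hp)
  obtain ⟨q⟩ := hconn.preconnected u w
  obtain ⟨p⟩ := hconn.preconnected u v
  exact key u w q ⟨p.bypass, p.bypass_isPath, p.bypass.start_mem_support⟩
end

section
/- Let G be a 2-connected graph, let P be a path in G from u to v, and let w be an internal vertex of P (i.e., w ∈ V(P) and w ∉ {u, v}). Then G has a spanning tree T such that every edge of P is an edge of T and the degree of w in T equals 2. -/
open SimpleGraph

theorem path_spanningCoe_isAcyclic {V : Type*} {G : SimpleGraph V} {u v : V}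
    (p : G.Walk u v) (hp : p.IsPath) : p.toSubgraph.spanningCoe.IsAcyclic := by
  induction p with
  | nil =>
    refine IsAcyclic.anti (G' := ⊥) ?_ isAcyclic_bot
    intro a b h
    simp at h
  | @cons a b c h q ih =>
    rw [Walk.cons_isPath_iff] at hp
    have h1 := ih hp.1
    have hn : ¬ q.toSubgraph.spanningCoe.Reachable a b := by
      rintro ⟨r⟩
      cases r with
      | nil => exact h.ne rfl
      | cons hr _ => exact hp.2 (q.mem_verts_toSubgraph.mp (q.toSubgraph.edge_vert hr))
    refine IsAcyclic.anti ?_ (h1.sup_edge_of_not_reachable hn)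
    intro x y hxy
    simp only [Subgraph.spanningCoe_adj, Walk.toSubgraph, Subgraph.sup_adj,
      subgraphOfAdj_adj] at hxy
    rcases hxy with hxy | hxy
    · right
      rw [edge_adj]
      have := h.ne
      grind
    · left; exact hxy

/-- Let `G` be a 2-connected graph (at least 3 vertices, connected, and connected after
deleting any single vertex), let `P` be a path in `G` from `u` to `v`, and let `w` be an
internal vertex of `P`. Then `G` has a spanning tree `T` containing every edge of `P`
in which `w` has degree exactly 2. -/
theorem two_connected_spanning_tree_through_path {V : Type*} [Fintype V]
    (G : SimpleGraph V) (h3 : 3 ≤ Fintype.card V) (hconn : G.Connected)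
    (h2 : ∀ x : V, (G.induce (({x} : Set V)ᶜ)).Connected)
    (u v w : V) (p : G.Walk u v) (hp : p.IsPath)
    (hw : w ∈ p.support) (hwu : w ≠ u) (hwv : w ≠ v) :
    ∃ T : SimpleGraph V, T ≤ G ∧ T.IsTree ∧
      (∀ e ∈ p.edges, e ∈ T.edgeSet) ∧ fdeg T w = 2 := by
  classical
  let G' : SimpleGraph V :=
    { Adj := fun a b => G.Adj a b ∧ ((a ≠ w ∧ b ≠ w) ∨ p.toSubgraph.Adj a b)
      symm := ⟨fun a b h => ⟨h.1.symm, h.2.imp (fun h => ⟨h.2, h.1⟩) (fun h => h.symm)⟩⟩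
      loopless := ⟨fun a h => G.loopless.irrefl a h.1⟩ }
  obtain ⟨i, hi, hil⟩ := Walk.mem_support_iff_exists_getVert.mp hw
  have hi0 : i ≠ 0 := by
    rintro rfl
    exact hwu (by simpa using hi.symm)
  have hil' : i < p.length := by
    refine lt_of_le_of_ne hil ?_
    rintro rfl
    exact hwv (by simpa using hi.symm)
  have hcard := hp.ncard_neighborSet_toSubgraph_internal_eq_two hi0 hil'
  have hadj := p.toSubgraph_adj_getVert hil'
  rw [hi] at hcard hadj
  have hz : G'.Adj w (p.getVert (i+1)) := ⟨hadj.adj_sub, Or.inr hadj⟩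
  let f : G.induce (({w} : Set V)ᶜ) →g G' :=
    ⟨fun x => x.1, fun {a b} h => ⟨h, Or.inl ⟨a.2, b.2⟩⟩⟩
  have hr : ∀ a, G'.Reachable a w := by
    intro a
    by_cases ha : a = w
    · rw [ha]
    · have hzw : p.getVert (i+1) ≠ w := hz.ne'
      have := ((h2 w).preconnected ⟨a, ha⟩ ⟨p.getVert (i+1), hzw⟩).map f
      exact Reachable.trans this hz.symm.reachable
  have hG' : G'.Connected :=
    { preconnected := fun a b => (hr a).trans (hr b).symm
      nonempty := ⟨w⟩ }
  obtain ⟨T, hHT, hTG, hT⟩ := hG'.exists_isTree_le_of_le_of_isAcyclic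
    (H := p.toSubgraph.spanningCoe)
    (fun a b h => ⟨Subgraph.Adj.adj_sub h, Or.inr h⟩) (path_spanningCoe_isAcyclic p hp)
  refine ⟨T, fun a b h => (hTG h).1, hT, ?_, ?_⟩
  · intro e he
    induction e with
    | h a b => exact hHT (p.mem_edges_toSubgraph.mpr he)
  · rw [fdeg, ← hcard]
    congr 1
    ext x
    constructor
    · intro h
      rcases (hTG h).2 with h | h
      · exact absurd rfl h.1
      · exact h
    · intro h
      exact hHT h
end
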